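/- Let f ∈ C^∞(ℝ, ℂ) satisfy f(±∞) = 0 and |f^{(k)}(p)| ≤ C_k (1+|p|)^{-(k+ε)} for all k ≥ 1 and some 0 < ε ≤ 1/2. Then the inverse Fourier transform of f is represented by a function V ∈ C^∞(ℝ \ {0}) satisfying, for every ℓ, k ≥ 0, the combined estimate |V^{(k)}(r)| ≤ C_{ℓ,k} |r|^{ε-k-1} (1+|r|)^{-ℓ} for all r ≠ 0. -/

import Mathlib

open Filter Real Topology MeasureTheory
open scoped ContDiff FourierTransform SchwartzMap

/-!
For a symbol `f` of order `m ∈ (-1, 0)`, such as the `f` of the theorem with `m = -ε`, the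
derivative `f'` is integrable, and `V r = (-2πir)⁻¹ 𝓕⁻ f' r` is the only candidate away from the
origin. Integration by parts makes `𝓕⁻ f'` rapidly decreasing; since `f'` has mean zero and is
`O(|p|^(m-1))`, replacing `e^{2πipr}` by `e^{2πipr} - 1` and scaling gives `𝓕⁻ f' = O(|r|^(-m))`.
Hence `V` is integrable and `(𝓕 V)' = f'`, so `𝓕 V = f` because both sides vanish at infinity.
Under `𝓕⁻` the operator `r d/dr - k` corresponds to an operator preserving symbols of order `m`,
so `r^k V^{(k)}` is again the kernel of a symbol of order `m`, and obeys the bounds already shown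
for `V`.
-/

section Calculus

variable {E : Type*} [NormedAddCommGroup E] [NormedSpace ℝ E] {f : ℝ → E}

lemma hasDerivAt_iteratedDeriv (hf : ContDiff ℝ ∞ f) (n : ℕ) (p : ℝ) :
    HasDerivAt (iteratedDeriv n f) (iteratedDeriv (n + 1) f p) p := by
  rw [iteratedDeriv_succ]
  exact (hf.differentiable_iteratedDeriv n (mod_cast WithTop.coe_lt_top n) p).hasDerivAt

lemma iteratedDeriv_id_smul (hf : ContDiff ℝ ∞ f) (n : ℕ) :
    iteratedDeriv (n + 1) (fun p : ℝ => p • f p) =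
      fun p => p • iteratedDeriv (n + 1) f p + (n + 1 : ℝ) • iteratedDeriv n f p := by
  have hsmul (k : ℕ) (p : ℝ) := (hasDerivAt_id' p).fun_smul (hasDerivAt_iteratedDeriv hf k p)
  induction n with
  | zero =>
    ext p
    simpa [iteratedDeriv_one] using (hsmul 0 p).deriv
  | succ n ih =>
    rw [iteratedDeriv_succ, ih]
    ext p
    rw [((hsmul (n + 1) p).fun_add
      ((hasDerivAt_iteratedDeriv hf n p).fun_const_smul (n + 1 : ℝ))).deriv]
    push_cast
    module

lemma norm_le_rpow_of_norm_deriv_le [CompleteSpace E] {f' : ℝ → E} {m C a : ℝ} (hm : m < 0)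
    (ha : 0 ≤ a) (hf : ∀ t ∈ Set.Ici a, HasDerivAt f (f' t) t) (hf' : AEStronglyMeasurable f')
    (hlim : Tendsto f atTop (𝓝 0)) (hbound : ∀ t ∈ Set.Ioi a, ‖f' t‖ ≤ C * (1 + t) ^ (m - 1)) :
    ‖f a‖ ≤ C / -m * (1 + a) ^ m := by
  have hint : IntegrableOn (fun t => C * (1 + t) ^ (m - 1)) (Set.Ioi a) := by
    simp only [add_comm (1 : ℝ)]
    exact (integrableOn_add_rpow_Ioi_of_lt (by linarith) (by linarith)).const_mul C
  have hf'int : IntegrableOn f' (Set.Ioi a) :=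
    hint.mono' hf'.restrict ((ae_restrict_mem measurableSet_Ioi).mono hbound)
  have hfa : f a = -∫ t in Set.Ioi a, f' t := by
    rw [integral_Ioi_of_hasDerivAt_of_tendsto' hf hf'int hlim, zero_sub, neg_neg]
  have hprim : ∫ t in Set.Ioi a, (1 + t) ^ (m - 1) = (1 + a) ^ m / -m := by
    have h := (measurePreserving_add_left volume (1 : ℝ)).setIntegral_preimage_emb
      (measurableEmbedding_addLeft 1) (fun t => t ^ (m - 1)) (Set.Ioi (1 + a))
    rw [Set.preimage_const_add_Ioi, add_sub_cancel_left] at h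
    rw [h, integral_Ioi_rpow_of_lt (by linarith) (by linarith), sub_add_cancel, neg_div, div_neg]
  calc ‖f a‖ = ‖∫ t in Set.Ioi a, f' t‖ := by rw [hfa, norm_neg]
    _ ≤ ∫ t in Set.Ioi a, C * (1 + t) ^ (m - 1) :=
      norm_integral_le_of_norm_le hint ((ae_restrict_mem measurableSet_Ioi).mono hbound)
    _ = C / -m * (1 + a) ^ m := by rw [integral_const_mul, hprim]; ring

end Calculus

/-- The class `S^m` of (constant-coefficient) symbols of order `m` on the line: smooth functions
whose `k`-th derivative is `O((1 + |p|)^(m - k))`. -/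
structure IsSymbol {E : Type*} [NormedAddCommGroup E] [NormedSpace ℝ E] (m : ℝ) (f : ℝ → E) :
    Prop where
  contDiff : ContDiff ℝ ∞ f
  exists_bound : ∀ k : ℕ, ∃ C : ℝ, ∀ p : ℝ,
    ‖iteratedDeriv k f p‖ ≤ C * (1 + |p|) ^ (m - k)

namespace IsSymbol

variable {E : Type*} [NormedAddCommGroup E] [NormedSpace ℝ E] {m c : ℝ} {f g : ℝ → E}

lemma of_norm_iteratedDeriv_le [CompleteSpace E] (hm : m < 0) (hf : ContDiff ℝ ∞ f)
    (htop : Tendsto f atTop (𝓝 0)) (hbot : Tendsto f atBot (𝓝 0))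
    (hder : ∀ k : ℕ, 1 ≤ k → ∃ C : ℝ, ∀ p : ℝ,
      ‖iteratedDeriv k f p‖ ≤ C * (1 + |p|) ^ (m - k)) :
    IsSymbol m f := by
  refine ⟨hf, fun k => ?_⟩
  obtain rfl | hk := k.eq_zero_or_pos
  swap
  · exact hder k hk
  obtain ⟨C, hC⟩ := hder 1 le_rfl
  have hderiv (t : ℝ) : HasDerivAt f (deriv f t) t := by
    simpa [iteratedDeriv_one] using hasDerivAt_iteratedDeriv hf 0 t
  have hcont : Continuous (deriv f) := hf.continuous_deriv (by simp)
  simp only [iteratedDeriv_one, Nat.cast_one] at hC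
  refine ⟨C / -m, fun p => ?_⟩
  rw [iteratedDeriv_zero, Nat.cast_zero, sub_zero]
  rcases le_total 0 p with hp | hp
  · rw [abs_of_nonneg hp]
    refine norm_le_rpow_of_norm_deriv_le hm hp (fun t _ => hderiv t)
      hcont.aestronglyMeasurable htop fun t ht => ?_
    simpa [abs_of_pos (hp.trans_lt ht)] using hC t
  · rw [abs_of_nonpos hp]
    have h := norm_le_rpow_of_norm_deriv_le (f := fun t => f (-t)) (C := C) hm (neg_nonneg.2 hp)
      (fun t _ => (hderiv (-t)).scomp t (hasDerivAt_neg t)) (by fun_prop)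
      (hbot.comp tendsto_neg_atTop_atBot) fun t ht => ?_
    · simpa using h
    · simpa [abs_of_pos ((neg_nonneg.2 hp).trans_lt ht)] using hC (-t)

protected lemma iteratedDeriv (hf : IsSymbol m f) (n : ℕ) :
    IsSymbol (m - n) (iteratedDeriv n f) := by
  refine ⟨by rw [iteratedDeriv_eq_iterate]; exact hf.contDiff.iterate_deriv n, fun k => ?_⟩
  obtain ⟨C, hC⟩ := hf.exists_bound (k + n)
  refine ⟨C, fun p => ?_⟩
  have h := hC p
  rw [iteratedDeriv_eq_iterate, Function.iterate_add_apply] at h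
  rw [iteratedDeriv_eq_iterate, iteratedDeriv_eq_iterate]
  convert h using 3
  push_cast
  ring

protected lemma deriv (hf : IsSymbol m f) : IsSymbol (m - 1) (deriv f) := by
  simpa [iteratedDeriv_one] using hf.iteratedDeriv 1

protected lemma const_smul (hf : IsSymbol m f) (c : ℝ) : IsSymbol m (fun p => c • f p) := by
  refine ⟨hf.contDiff.const_smul c, fun k => ?_⟩
  obtain ⟨C, hC⟩ := hf.exists_bound k
  refine ⟨|c| * C, fun p => ?_⟩
  rw [iteratedDeriv_fun_const_smul_field, norm_smul, Real.norm_eq_abs, mul_assoc]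
  gcongr
  exact hC p

protected lemma sub (hf : IsSymbol m f) (hg : IsSymbol m g) : IsSymbol m (fun p => f p - g p) := by
  refine ⟨hf.contDiff.sub hg.contDiff, fun k => ?_⟩
  obtain ⟨C, hC⟩ := hf.exists_bound k
  obtain ⟨D, hD⟩ := hg.exists_bound k
  refine ⟨C + D, fun p => ?_⟩
  rw [iteratedDeriv_fun_sub (hf.contDiff.of_le (by exact_mod_cast le_top)).contDiffAt
    (hg.contDiff.of_le (by exact_mod_cast le_top)).contDiffAt, add_mul]
  exact norm_sub_le_of_le (hC p) (hD p)

lemma id_smul (hf : IsSymbol m f) : IsSymbol (m + 1) (fun p => p • f p) := by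
  refine ⟨contDiff_id.smul hf.contDiff, fun k => ?_⟩
  have hid {C s : ℝ} {v : E} {p : ℝ} (hv : ‖v‖ ≤ C * (1 + |p|) ^ s) :
      ‖p • v‖ ≤ C * (1 + |p|) ^ (s + 1) := by
    have h0 : 0 < 1 + |p| := by positivity
    rw [norm_smul, Real.norm_eq_abs, rpow_add_one h0.ne', ← mul_assoc, mul_comm]
    exact mul_le_mul hv (by linarith) (abs_nonneg p) ((norm_nonneg v).trans hv)
  cases k with
  | zero =>
    obtain ⟨C, hC⟩ := hf.exists_bound 0
    exact ⟨C, fun p => by simpa using hid (hC p)⟩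
  | succ n =>
    obtain ⟨C, hC⟩ := hf.exists_bound (n + 1)
    obtain ⟨D, hD⟩ := hf.exists_bound n
    refine ⟨C + (n + 1) * D, fun p => ?_⟩
    rw [iteratedDeriv_id_smul hf.contDiff, add_mul, mul_assoc]
    refine norm_add_le_of_le ?_ ?_
    · rw [show m + 1 - (n + 1 : ℕ) = m - (n + 1 : ℕ) + 1 by ring]
      exact hid (hC p)
    · rw [norm_smul, Real.norm_of_nonneg (by positivity),
        show m + 1 - (n + 1 : ℕ) = m - n by push_cast; ring]
      gcongr
      exact hD p

lemma comp_const_mul (hf : IsSymbol m f) (hm : m ≤ 0) (hc : 1 ≤ |c|) :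
    IsSymbol m (fun p => f (c * p)) := by
  refine ⟨hf.contDiff.comp (contDiff_const.mul contDiff_id), fun k => ?_⟩
  obtain ⟨C, hC⟩ := hf.exists_bound k
  have hC0 : 0 ≤ C := by simpa using (norm_nonneg _).trans (hC 0)
  refine ⟨|c| ^ k * C, fun p => ?_⟩
  rw [iteratedDeriv_comp_const_smul (hf.contDiff.of_le (by exact_mod_cast le_top)), norm_smul,
    norm_pow, Real.norm_eq_abs, mul_assoc]
  gcongr
  refine (hC _).trans ?_
  have hk : m - k ≤ 0 := by linarith [k.cast_nonneg (α := ℝ)]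
  have hp : |p| ≤ |c * p| := by
    rw [abs_mul]
    exact le_mul_of_one_le_left (abs_nonneg p) hc
  gcongr ?_ * ?_
  exact rpow_le_rpow_of_nonpos (by positivity) (by linarith) hk

protected lemma integrable (hf : IsSymbol m f) (hm : m < -1) : Integrable f := by
  obtain ⟨C, hC⟩ := hf.exists_bound 0
  have hw : Integrable fun p : ℝ => (1 + |p|) ^ m := by
    simpa using integrable_one_add_norm (E := ℝ) (μ := volume) (r := -m)
      (by simpa using by linarith)
  exact (hw.const_mul C).mono' hf.contDiff.continuous.aestronglyMeasurable
    (.of_forall fun p => by simpa using hC p)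

lemma tendsto_zero (hf : IsSymbol m f) (hm : m < 0) : Tendsto f (cocompact ℝ) (𝓝 0) := by
  obtain ⟨C, hC⟩ := hf.exists_bound 0
  have hinf : Tendsto (fun p : ℝ => 1 + |p|) (cocompact ℝ) atTop :=
    tendsto_atTop_add_const_left _ _ (tendsto_norm_cocompact_atTop (E := ℝ))
  have hw := ((tendsto_rpow_neg_atTop (neg_pos.2 hm)).comp hinf).const_mul C
  simp only [neg_neg, mul_zero] at hw
  exact squeeze_zero_norm (fun p => by simpa using hC p) hw

end IsSymbol

section PowerWeights

lemma integrable_abs_rpow_mul_comp_abs {φ : ℝ → ℝ} {a b s : ℝ}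
    (hφ : LocallyIntegrableOn φ (Set.Ioi 0)) (htop : φ =O[atTop] fun x => x ^ (-a)) (ha : s < a)
    (hzero : φ =O[𝓝[>] 0] fun x => x ^ (-b)) (hb : b < s) :
    Integrable fun x : ℝ => |x| ^ (s - 1) * φ |x| := by
  have h := mellin_convergent_of_isBigO_scalar hφ htop ha hzero hb
  refine (integrable_fun_norm_addHaar volume (E := ℝ) (f := fun t => t ^ (s - 1) * φ t)).2 ?_
  simpa using h

lemma integrable_abs_rpow_mul_min {s : ℝ} (hs1 : -1 < s) (hs0 : s < 0) :
    Integrable fun x : ℝ => |x| ^ (s - 1) * min 1 |x| := by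
  refine integrable_abs_rpow_mul_comp_abs (φ := fun t => min 1 t) (a := 0) (b := -1)
    ((continuous_const.min continuous_id).locallyIntegrable.locallyIntegrableOn _) ?_ hs0 ?_ hs1
  · refine .of_bound 1 ?_
    filter_upwards [eventually_ge_atTop 1] with t ht
    simp [ht]
  · refine .of_bound 1 ?_
    filter_upwards [self_mem_nhdsWithin] with t ht
    have ht0 : 0 < t := ht
    simp [abs_of_nonneg, ht0.le, rpow_one]

lemma integrable_abs_rpow_mul_one_add_abs_rpow {s t : ℝ} (hs : 0 < s) (hst : s < t) :
    Integrable fun x : ℝ => |x| ^ (s - 1) * (1 + |x|) ^ (-t) := by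
  refine integrable_abs_rpow_mul_comp_abs (φ := fun x => (1 + x) ^ (-t)) (a := t) (b := 0)
    (ContinuousOn.locallyIntegrableOn ?_ measurableSet_Ioi) ?_ hst ?_ hs
  · refine ContinuousOn.rpow_const (by fun_prop) fun x hx => .inl ?_
    have hx0 : 0 < x := hx
    positivity
  · refine .of_bound 1 ?_
    filter_upwards [eventually_gt_atTop 0] with x hx
    rw [one_mul, Real.norm_of_nonneg (by positivity), Real.norm_of_nonneg (by positivity)]
    exact rpow_le_rpow_of_nonpos hx (by linarith) (by linarith)
  · refine .of_bound 1 ?_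
    filter_upwards [self_mem_nhdsWithin] with x hx
    have hx0 : 0 < x := hx
    rw [one_mul, Real.norm_of_nonneg (by positivity), neg_zero, rpow_zero, norm_one]
    exact rpow_le_one_of_one_le_of_nonpos (by linarith) (by linarith)

end PowerWeights

section FourierInv

variable {E : Type*} [NormedAddCommGroup E] [NormedSpace ℂ E] {f g : ℝ → E}

lemma norm_fourierInv_le (f : ℝ → E) (r : ℝ) : ‖𝓕⁻ f r‖ ≤ ∫ p, ‖f p‖ :=
  VectorFourier.norm_fourierIntegral_le_integral_norm ..

lemma continuous_fourierInv (hf : Integrable f) : Continuous (𝓕⁻ f) :=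
  VectorFourier.fourierIntegral_continuous continuous_fourierChar (by fun_prop) hf

lemma fourierInv_eq_integral_exp (f : ℝ → E) (x : ℝ) :
    𝓕⁻ f x = ∫ r : ℝ, Complex.exp (Complex.I * ↑(2 * π * x) * r) • f r := by
  rw [fourierInv_eq']
  refine integral_congr_ae (.of_forall fun r => ?_)
  dsimp only
  congr 2
  rw [RCLike.inner_apply, conj_trivial]
  push_cast
  ring

lemma fourierInv_const_smul (c : ℂ) (f : ℝ → E) (r : ℝ) :
    𝓕⁻ (fun p => c • f p) r = c • 𝓕⁻ f r := by
  simp only [fourierInv_eq, ← integral_smul, smul_comm c]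

lemma fourierInv_sub (hf : Integrable f) (hg : Integrable g) (r : ℝ) :
    𝓕⁻ (fun p => f p - g p) r = 𝓕⁻ f r - 𝓕⁻ g r := by
  simp only [fourierInv_eq, smul_sub]
  refine integral_sub ?_ ?_
  · simpa using (fourierIntegral_convergent_iff (-r)).2 hf
  · simpa using (fourierIntegral_convergent_iff (-r)).2 hg

lemma hasDerivAt_fourierInv (hf : Integrable f) (hf' : Integrable fun p => p • f p) (r : ℝ) :
    HasDerivAt (𝓕⁻ f) ((2 * π * Complex.I) • 𝓕⁻ (fun p => p • f p) r) r := by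
  have h := (hasDerivAt_fourier hf hf' (-r)).scomp r (hasDerivAt_neg r)
  have hsmul : (fun p : ℝ => (-2 * π * Complex.I * p) • f p) =
      fun p => (-2 * π * Complex.I) • p • f p := by
    simp [mul_smul]
  simp only [Function.comp_def, ← fourierInv_eq_fourier_neg, hsmul] at h
  convert h using 1
  rw [fourierInv_const_smul]
  simp

lemma abs_le_norm_two_pi_I_mul (r : ℝ) : |r| ≤ ‖-(2 * π * Complex.I * r)‖ := by
  simp only [norm_neg, norm_mul, Complex.norm_real, Complex.norm_I, Real.norm_eq_abs,
    Complex.norm_ofNat, abs_of_pos pi_pos, mul_one]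
  exact le_mul_of_one_le_left (abs_nonneg r) (by linarith [pi_gt_three])

lemma norm_fourierChar_sub_one_le (x : ℝ) : ‖(𝐞 x : ℂ) - 1‖ ≤ 2 * π * min 1 |x| := by
  rw [mul_min_of_nonneg _ _ (by positivity), mul_one, le_min_iff]
  constructor
  · calc ‖(𝐞 x : ℂ) - 1‖ ≤ ‖(𝐞 x : ℂ)‖ + ‖(1 : ℂ)‖ := norm_sub_le _ _
      _ = 2 := by norm_num [Circle.norm_coe]
      _ ≤ 2 * π := by linarith [pi_gt_three]
  · rw [fourierChar_apply, mul_comm]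
    simpa [abs_of_pos pi_pos, mul_assoc] using norm_exp_I_mul_ofReal_sub_one_le (x := 2 * π * x)

lemma fourierInv_eq_integral_fourierChar_sub_one_smul (hf : Integrable f) (hmean : ∫ p, f p = 0)
    (r : ℝ) : 𝓕⁻ f r = ∫ p, ((𝐞 (r * p) : ℂ) - 1) • f p := by
  have hint : Integrable fun p => (𝐞 (r * p) : ℂ) • f p := by
    simpa [Circle.smul_def] using (fourierIntegral_convergent_iff (-r)).2 hf
  simp only [sub_smul, one_smul]
  rw [integral_sub hint hf, hmean, sub_zero, fourierInv_eq]
  simp [Circle.smul_def]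

lemma exists_norm_fourierInv_le_rpow {ε C : ℝ} (hε0 : 0 < ε) (hε1 : ε < 1) (hf : Integrable f)
    (hmean : ∫ p, f p = 0) (hbound : ∀ p ≠ 0, ‖f p‖ ≤ C * |p| ^ (-ε - 1)) :
    ∃ K, ∀ r, ‖𝓕⁻ f r‖ ≤ K * |r| ^ ε := by
  set w : ℝ → ℝ := fun q => |q| ^ (-ε - 1) * min 1 |q|
  have hw : Integrable w := integrable_abs_rpow_mul_min (by linarith) (by linarith)
  refine ⟨2 * π * C * ∫ q, w q, fun r => ?_⟩
  obtain rfl | hr := eq_or_ne r 0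
  · simp [fourierInv_eq, hmean, hε0.ne']
  have hle {p : ℝ} (hp : p ≠ 0) :
      ‖((𝐞 (r * p) : ℂ) - 1) • f p‖ ≤ 2 * π * C * |r| ^ (ε + 1) * w (r * p) := by
    have hscale : |r| ^ (ε + 1) * |r * p| ^ (-ε - 1) = |p| ^ (-ε - 1) := by
      rw [abs_mul, mul_rpow (abs_nonneg r) (abs_nonneg p), ← mul_assoc, ← rpow_add (abs_pos.2 hr)]
      simp
    calc ‖((𝐞 (r * p) : ℂ) - 1) • f p‖ ≤ 2 * π * min 1 |r * p| * (C * |p| ^ (-ε - 1)) := by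
          rw [norm_smul]
          gcongr
          exacts [norm_fourierChar_sub_one_le _, hbound p hp]
      _ = 2 * π * C * |r| ^ (ε + 1) * w (r * p) := by
        rw [← hscale]
        ring
  calc ‖𝓕⁻ f r‖ ≤ ∫ p, 2 * π * C * |r| ^ (ε + 1) * w (r * p) := by
        rw [fourierInv_eq_integral_fourierChar_sub_one_smul hf hmean]
        exact norm_integral_le_of_norm_le ((hw.comp_mul_left' hr).const_mul _)
          ((Measure.ae_ne volume 0).mono fun p hp => hle hp)
    _ = 2 * π * C * (∫ q, w q) * (|r| ^ (ε + 1) * |r|⁻¹) := by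
      rw [integral_const_mul, Measure.integral_comp_mul_left, smul_eq_mul, abs_inv]
      ring
    _ = 2 * π * C * (∫ q, w q) * |r| ^ ε := by
      rw [rpow_add_one (abs_ne_zero.2 hr), mul_inv_cancel_right₀ (abs_ne_zero.2 hr)]

end FourierInv

/-- The function representing the distributional inverse Fourier transform of a symbol `f` of
negative order. It is defined through `f'`, which is integrable while `f` need not be; the inverse
makes it vanish at `r = 0`. -/
noncomputable def fourierInvKernel {E : Type*} [NormedAddCommGroup E] [NormedSpace ℂ E]
    (f : ℝ → E) (r : ℝ) : E :=
  (-(2 * π * Complex.I * r))⁻¹ • 𝓕⁻ (deriv f) r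

/-- The operator on symbols which corresponds to `r d/dr - c` under the inverse Fourier
transform. -/
noncomputable def eulerAdjoint {E : Type*} [NormedAddCommGroup E] [NormedSpace ℝ E]
    (c : ℝ) (f : ℝ → E) (p : ℝ) : E :=
  (-(c + 1)) • f p - p • deriv f p

namespace IsSymbol

variable {E : Type*} [NormedAddCommGroup E] [NormedSpace ℂ E] {m : ℝ} {f : ℝ → E}

lemma fourierInv_iteratedDeriv (hf : IsSymbol m f) (hm : m < -1) (n : ℕ) (r : ℝ) :
    𝓕⁻ (iteratedDeriv n f) r = (-(2 * π * Complex.I * r)) ^ n • 𝓕⁻ f r := by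
  have hint (k : ℕ) : Integrable (iteratedDeriv k f) :=
    (hf.iteratedDeriv k).integrable (by linarith [k.cast_nonneg (α := ℝ)])
  simp [fourierInv_eq_fourier_neg, fourier_iteratedDeriv (N := ⊤) hf.contDiff (fun k _ => hint k)]

lemma exists_norm_fourierInv_le (hf : IsSymbol m f) (hm : m < -1) (ℓ : ℕ) :
    ∃ C, ∀ r, ‖𝓕⁻ f r‖ ≤ C * (1 + |r|) ^ (-(ℓ : ℝ)) := by
  have hmoment (r : ℝ) : |r| ^ ℓ * ‖𝓕⁻ f r‖ ≤ ∫ p, ‖iteratedDeriv ℓ f p‖ := by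
    calc |r| ^ ℓ * ‖𝓕⁻ f r‖ ≤ ‖-(2 * π * Complex.I * r)‖ ^ ℓ * ‖𝓕⁻ f r‖ := by
          gcongr
          exact abs_le_norm_two_pi_I_mul r
      _ = ‖𝓕⁻ (iteratedDeriv ℓ f) r‖ := by
        rw [hf.fourierInv_iteratedDeriv hm, norm_smul, norm_pow]
      _ ≤ ∫ p, ‖iteratedDeriv ℓ f p‖ := norm_fourierInv_le _ r
  refine ⟨2 ^ (ℓ - 1) * ((∫ p, ‖f p‖) + ∫ p, ‖iteratedDeriv ℓ f p‖), fun r => ?_⟩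
  rw [rpow_neg (by positivity), rpow_natCast, ← div_eq_mul_inv, le_div_iff₀ (by positivity)]
  calc ‖𝓕⁻ f r‖ * (1 + |r|) ^ ℓ ≤ ‖𝓕⁻ f r‖ * (2 ^ (ℓ - 1) * (1 ^ ℓ + |r| ^ ℓ)) := by
        gcongr
        exact add_pow_le zero_le_one (abs_nonneg r) ℓ
    _ = 2 ^ (ℓ - 1) * (‖𝓕⁻ f r‖ + |r| ^ ℓ * ‖𝓕⁻ f r‖) := by ring
    _ ≤ _ := by
      gcongr
      exacts [norm_fourierInv_le f r, hmoment r]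

lemma integrable_fourierInv (hf : IsSymbol m f) (hm : m < -1) : Integrable (𝓕⁻ f) := by
  obtain ⟨C, hC⟩ := hf.exists_norm_fourierInv_le hm 2
  have hw : Integrable fun r : ℝ => (1 + |r|) ^ (-((2 : ℕ) : ℝ)) :=
    integrable_one_add_norm (E := ℝ) (by simp)
  exact (hw.const_mul C).mono' (continuous_fourierInv (hf.integrable hm)).aestronglyMeasurable
    (.of_forall hC)

lemma fourier_fourierInv [CompleteSpace E] (hf : IsSymbol m f) (hm : m < -1) :
    𝓕 (𝓕⁻ f) = f := by
  refine hf.contDiff.continuous.fourier_fourierInv_eq (hf.integrable hm) ?_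
  simpa [fourierInv_eq_fourier_neg] using (hf.integrable_fourierInv hm).comp_neg

protected lemma hasDerivAt (hf : IsSymbol m f) (p : ℝ) : HasDerivAt f (deriv f p) p :=
  (hf.contDiff.differentiable (by simp) p).hasDerivAt

lemma integral_deriv_eq_zero [CompleteSpace E] (hf : IsSymbol m f) (hm : m < 0) :
    ∫ p, deriv f p = 0 := by
  have hlim : Tendsto f (atBot ⊔ atTop) (𝓝 0) := by
    simpa only [cocompact_eq_atBot_atTop] using hf.tendsto_zero hm
  rw [integral_of_hasDerivAt_of_tendsto hf.hasDerivAt (hf.deriv.integrable (by linarith))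
    (hlim.mono_left le_sup_left) (hlim.mono_left le_sup_right), sub_zero]

lemma exists_norm_fourierInv_deriv_le_rpow [CompleteSpace E] (hf : IsSymbol m f) (hm1 : -1 < m)
    (hm0 : m < 0) : ∃ K, ∀ r, ‖𝓕⁻ (deriv f) r‖ ≤ K * |r| ^ (-m) := by
  obtain ⟨C, hC⟩ := hf.deriv.exists_bound 0
  simp only [iteratedDeriv_zero, Nat.cast_zero, sub_zero] at hC
  have hC0 : 0 ≤ C := by simpa using (norm_nonneg _).trans (hC 0)
  refine exists_norm_fourierInv_le_rpow (C := C) (by linarith) (by linarith)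
    (hf.deriv.integrable (by linarith)) (hf.integral_deriv_eq_zero hm0) fun p hp => ?_
  rw [neg_neg]
  refine (hC p).trans ?_
  gcongr ?_ * ?_
  exact rpow_le_rpow_of_nonpos (abs_pos.2 hp) (by linarith) (by linarith)

lemma exists_norm_fourierInv_deriv_le [CompleteSpace E] (hf : IsSymbol m f) (hm1 : -1 < m)
    (hm0 : m < 0) (ℓ : ℕ) :
    ∃ C, ∀ r, ‖𝓕⁻ (deriv f) r‖ ≤ C * (|r| ^ (-m) * (1 + |r|) ^ (-(ℓ : ℝ))) := by
  obtain ⟨K, hK⟩ := hf.exists_norm_fourierInv_deriv_le_rpow hm1 hm0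
  obtain ⟨C, hC⟩ := hf.deriv.exists_norm_fourierInv_le (by linarith) ℓ
  have hK0 : 0 ≤ K := by simpa using (norm_nonneg _).trans (hK 1)
  have hC0 : 0 ≤ C := by simpa using (norm_nonneg _).trans (hC 0)
  refine ⟨K * 2 ^ ℓ + C, fun r => ?_⟩
  set D := (1 + |r|) ^ (-(ℓ : ℝ)) with hD
  have hD0 : 0 ≤ D := by positivity
  obtain hr | hr := le_total |r| 1
  · have hle : 1 ≤ 2 ^ ℓ * D := by
      rw [hD, rpow_neg (by positivity), rpow_natCast, ← div_eq_mul_inv, one_le_div (by positivity)]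
      gcongr
      linarith
    calc ‖𝓕⁻ (deriv f) r‖ ≤ K * |r| ^ (-m) := hK r
      _ ≤ K * |r| ^ (-m) * (2 ^ ℓ * D) := le_mul_of_one_le_right (by positivity) hle
      _ = K * 2 ^ ℓ * (|r| ^ (-m) * D) := by ring
      _ ≤ (K * 2 ^ ℓ + C) * (|r| ^ (-m) * D) := by
        gcongr
        linarith
  · calc ‖𝓕⁻ (deriv f) r‖ ≤ C * D := hC r
      _ ≤ C * (|r| ^ (-m) * D) := by
        gcongr
        exact le_mul_of_one_le_left hD0 (one_le_rpow hr (by linarith))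
      _ ≤ (K * 2 ^ ℓ + C) * (|r| ^ (-m) * D) := by
        gcongr
        exact le_add_of_nonneg_left (by positivity)

lemma exists_norm_fourierInvKernel_le [CompleteSpace E] (hf : IsSymbol m f) (hm1 : -1 < m)
    (hm0 : m < 0) (ℓ : ℕ) : ∃ C, ∀ r ≠ 0,
    ‖fourierInvKernel f r‖ ≤ C * (|r| ^ (-m - 1) * (1 + |r|) ^ (-(ℓ : ℝ))) := by
  obtain ⟨C, hC⟩ := hf.exists_norm_fourierInv_deriv_le hm1 hm0 ℓ
  refine ⟨C, fun r hr => ?_⟩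
  have hr0 : 0 < |r| := abs_pos.2 hr
  calc ‖fourierInvKernel f r‖ ≤ |r|⁻¹ * (C * (|r| ^ (-m) * (1 + |r|) ^ (-(ℓ : ℝ)))) := by
        rw [fourierInvKernel, norm_smul, norm_inv]
        gcongr
        exacts [abs_le_norm_two_pi_I_mul r, hC r]
    _ = C * (|r| ^ (-m - 1) * (1 + |r|) ^ (-(ℓ : ℝ))) := by
      rw [rpow_sub_one hr0.ne']
      ring

lemma integrable_fourierInvKernel [CompleteSpace E] (hf : IsSymbol m f) (hm1 : -1 < m)
    (hm0 : m < 0) : Integrable (fourierInvKernel f) := by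
  obtain ⟨C, hC⟩ := hf.exists_norm_fourierInvKernel_le hm1 hm0 1
  have hw := integrable_abs_rpow_mul_one_add_abs_rpow (s := -m) (t := (1 : ℕ)) (by linarith)
    (by norm_num; linarith)
  have hmeas : AEStronglyMeasurable (fourierInvKernel f) :=
    (by fun_prop : Measurable fun r : ℝ => (-(2 * π * Complex.I * r))⁻¹).aestronglyMeasurable.smul
      (continuous_fourierInv (hf.deriv.integrable (by linarith))).aestronglyMeasurable
  exact (hw.const_mul C).mono' hmeas ((Measure.ae_ne volume 0).mono hC)

lemma hasDerivAt_fourier_fourierInvKernel [CompleteSpace E] (hf : IsSymbol m f) (hm1 : -1 < m)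
    (hm0 : m < 0) (p : ℝ) : HasDerivAt (𝓕 (fourierInvKernel f)) (deriv f p) p := by
  have hmul : (fun r : ℝ => (-2 * π * Complex.I * r) • fourierInvKernel f r) =ᵐ[volume]
      𝓕⁻ (deriv f) := by
    filter_upwards [Measure.ae_ne volume 0] with r hr
    rw [fourierInvKernel, neg_mul, neg_mul, neg_mul, smul_inv_smul₀ (by simp [hr])]
  have hrV : Integrable fun r : ℝ => r • fourierInvKernel f r := by
    refine (((hf.deriv.integrable_fourierInv (by linarith)).congr hmul.symm).smul
      (-2 * π * Complex.I)⁻¹).congr (.of_forall fun r => ?_)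
    rw [Pi.smul_apply, mul_smul _ (r : ℂ), inv_smul_smul₀ (by simp), Complex.coe_smul]
  convert hasDerivAt_fourier (hf.integrable_fourierInvKernel hm1 hm0) hrV p using 1
  rw [fourier_congr_ae hmul, hf.deriv.fourier_fourierInv (by linarith)]

lemma fourier_fourierInvKernel [CompleteSpace E] (hf : IsSymbol m f) (hm1 : -1 < m) (hm0 : m < 0) :
    𝓕 (fourierInvKernel f) = f := by
  have hderiv (p : ℝ) :=
    (hf.hasDerivAt_fourier_fourierInvKernel hm1 hm0 p).fun_sub (hf.hasDerivAt p)
  have hconst (p q : ℝ) := is_const_of_deriv_eq_zero (fun p => (hderiv p).differentiableAt)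
    (fun p => by rw [(hderiv p).deriv, sub_self]) p q
  have hlim := (zero_at_infty_fourier (fourierInvKernel f)).sub (hf.tendsto_zero hm0)
  ext p
  simp only [hconst _ p, sub_zero, tendsto_const_nhds_iff] at hlim
  exact sub_eq_zero.1 hlim

lemma deriv_eulerAdjoint (hf : IsSymbol m f) (c : ℝ) :
    deriv (eulerAdjoint c f) = fun p => (-(c + 2)) • deriv f p - p • deriv (deriv f) p := by
  ext p
  have h := ((hf.hasDerivAt p).fun_const_smul (-(c + 1))).fun_sub
    ((hasDerivAt_id' p).fun_smul (hf.deriv.hasDerivAt p))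
  rw [show eulerAdjoint c f = fun q => (-(c + 1)) • f q - q • deriv f q from rfl, h.deriv]
  module

protected lemma eulerAdjoint (hf : IsSymbol m f) (c : ℝ) : IsSymbol m (eulerAdjoint c f) :=
  (hf.const_smul (-(c + 1))).sub (by simpa using hf.deriv.id_smul)

lemma integrable_id_smul_deriv_deriv (hf : IsSymbol m f) (hm : m < 0) :
    Integrable fun p => p • deriv (deriv f) p :=
  hf.deriv.deriv.id_smul.integrable (by linarith)

lemma fourierInv_deriv_eulerAdjoint (hf : IsSymbol m f) (hm : m < 0) (c r : ℝ) :
    𝓕⁻ (deriv (eulerAdjoint c f)) r = (-(c + 2)) • 𝓕⁻ (deriv f) r -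
      𝓕⁻ (fun p => p • deriv (deriv f) p) r := by
  have hsmul := fourierInv_const_smul (-(c + 2) : ℝ) (deriv f) r
  simp only [Complex.coe_smul] at hsmul
  rw [hf.deriv_eulerAdjoint, fourierInv_sub (f := fun p => (-(c + 2)) • deriv f p)
    ((hf.deriv.integrable (by linarith)).smul _) (hf.integrable_id_smul_deriv_deriv hm), hsmul]

lemma fourierInv_deriv_deriv (hf : IsSymbol m f) (hm : m < 0) (r : ℝ) :
    𝓕⁻ (deriv (deriv f)) r = (-(2 * π * Complex.I * r)) • 𝓕⁻ (deriv f) r := by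
  simpa [iteratedDeriv_one] using hf.deriv.fourierInv_iteratedDeriv (by linarith) 1 r

-- Near `r` the kernel is rewritten through `f''`: both `f''` and `p f''` are integrable, so that
-- `𝓕⁻ f''` may be differentiated, while `p f'` need not be.
lemma hasDerivAt_pow_inv_smul_fourierInvKernel (hf : IsSymbol m f) (hm : m < 0) (k : ℕ) {r : ℝ}
    (hr : r ≠ 0) : HasDerivAt (fun r : ℝ => ((r : ℂ) ^ k)⁻¹ • fourierInvKernel f r)
      (((r : ℂ) ^ (k + 1))⁻¹ • fourierInvKernel (eulerAdjoint k f) r) r := by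
  have hpow : HasDerivAt (fun r : ℝ => (r : ℂ) ^ (k + 2)) ((k + 2) * (r : ℂ) ^ (k + 1)) r := by
    simpa using (hasDerivAt_id r).ofReal_comp.fun_pow (k + 2)
  have hF := hasDerivAt_fourierInv (hf.deriv.deriv.integrable (by linarith))
    (hf.integrable_id_smul_deriv_deriv hm) r
  have hr0 : (r : ℂ) ≠ 0 := mod_cast hr
  have h := ((hpow.fun_inv (pow_ne_zero _ hr0)).fun_smul hF).fun_const_smul
    ((-(2 * π * Complex.I))⁻¹ ^ 2)
  refine (h.congr_of_eventuallyEq ?_).congr_deriv ?_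
  · filter_upwards [isOpen_ne.mem_nhds hr] with x hx
    have hx0 : (x : ℂ) ≠ 0 := mod_cast hx
    rw [hf.fourierInv_deriv_deriv hm, fourierInvKernel]
    match_scalars
    field_simp
    ring
  · rw [fourierInvKernel, hf.fourierInv_deriv_eulerAdjoint hm, hf.fourierInv_deriv_deriv hm]
    match_scalars <;> field_simp <;> ring

lemma exists_iteratedDeriv_fourierInvKernel_eq (hf : IsSymbol m f) (hm : m < 0) (k : ℕ) :
    ∃ g, IsSymbol m g ∧ ∀ r ≠ 0, iteratedDeriv k (fourierInvKernel f) r =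
      ((r : ℂ) ^ k)⁻¹ • fourierInvKernel g r := by
  induction k with
  | zero => exact ⟨f, hf, by simp⟩
  | succ k ih =>
    obtain ⟨g, hg, hfg⟩ := ih
    refine ⟨_, hg.eulerAdjoint k, fun r hr => ?_⟩
    rw [iteratedDeriv_succ, ← (hg.hasDerivAt_pow_inv_smul_fourierInvKernel hm k hr).deriv]
    refine EventuallyEq.deriv_eq ?_
    filter_upwards [isOpen_ne.mem_nhds hr] with x hx using hfg x hx

lemma contDiffOn_fourierInvKernel (hf : IsSymbol m f) (hm : m < 0) :
    ContDiffOn ℝ ∞ (fourierInvKernel f) {0}ᶜ := by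
  refine contDiffOn_of_differentiableOn_deriv fun k _ => ?_
  obtain ⟨g, hg, hfg⟩ := hf.exists_iteratedDeriv_fourierInvKernel_eq hm k
  have hdiff : DifferentiableOn ℝ (fun r : ℝ => ((r : ℂ) ^ k)⁻¹ • fourierInvKernel g r) {0}ᶜ :=
    fun r hr => (hg.hasDerivAt_pow_inv_smul_fourierInvKernel hm k
      hr).differentiableAt.differentiableWithinAt
  refine hdiff.congr fun r hr => ?_
  rw [iteratedDerivWithin_of_isOpen isOpen_compl_singleton hr, hfg r hr]

lemma exists_norm_iteratedDeriv_fourierInvKernel_le [CompleteSpace E] (hf : IsSymbol m f)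
    (hm1 : -1 < m) (hm0 : m < 0) (ℓ k : ℕ) : ∃ C, ∀ r ≠ 0,
    ‖iteratedDeriv k (fourierInvKernel f) r‖ ≤
      C * |r| ^ (-m - k - 1) * (1 + |r|) ^ (-(ℓ : ℝ)) := by
  obtain ⟨g, hg, hfg⟩ := hf.exists_iteratedDeriv_fourierInvKernel_eq hm0 k
  obtain ⟨C, hC⟩ := hg.exists_norm_fourierInvKernel_le hm1 hm0 ℓ
  refine ⟨C, fun r hr => ?_⟩
  have hr0 : 0 < |r| := abs_pos.2 hr
  calc ‖iteratedDeriv k (fourierInvKernel f) r‖ = (|r| ^ k)⁻¹ * ‖fourierInvKernel g r‖ := by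
        rw [hfg r hr, norm_smul, norm_inv, norm_pow, Complex.norm_real, Real.norm_eq_abs]
    _ ≤ (|r| ^ k)⁻¹ * (C * (|r| ^ (-m - 1) * (1 + |r|) ^ (-(ℓ : ℝ)))) := by
      gcongr
      exact hC r hr
    _ = C * |r| ^ (-m - k - 1) * (1 + |r|) ^ (-(ℓ : ℝ)) := by
      rw [sub_right_comm, rpow_sub_natCast hr0.ne']
      ring

lemma integral_fourierInv_smul_eq [CompleteSpace E] (hf : IsSymbol m f) (hm1 : -1 < m) (hm0 : m < 0)
    (ψ : 𝓢(ℝ, ℂ)) : ∫ p, 𝓕⁻ (ψ : ℝ → ℂ) p • f p = ∫ r, ψ r • fourierInvKernel f r := by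
  let φ : 𝓢(ℝ, ℂ) := 𝓕⁻ ψ
  have hφ : 𝓕 (φ : ℝ → ℂ) = ψ := by
    rw [← SchwartzMap.fourier_coe, FourierTransform.fourier_fourierInv_eq]
  have h := VectorFourier.integral_fourierIntegral_smul_eq_flip (L := innerₗ ℝ)
    continuous_fourierChar continuous_inner (φ.integrable (μ := volume))
    (hf.integrable_fourierInvKernel hm1 hm0)
  rw [flip_innerₗ] at h
  change ∫ r, 𝓕 (φ : ℝ → ℂ) r • fourierInvKernel f r = ∫ p, φ p • 𝓕 (fourierInvKernel f) p at h
  rw [hφ, hf.fourier_fourierInvKernel hm1 hm0] at h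
  rw [← SchwartzMap.fourierInv_coe, h]

end IsSymbol

theorem stmt8_general {E : Type*} [NormedAddCommGroup E] [NormedSpace ℂ E] [CompleteSpace E]
    (f : ℝ → E) (Ck : ℕ → ℝ) (ε : ℝ) (hε0 : 0 < ε) (hε1 : ε < 1) (hf : ContDiff ℝ ∞ f)
    (htop : Tendsto f atTop (𝓝 0)) (hbot : Tendsto f atBot (𝓝 0))
    (hder : ∀ k : ℕ, 1 ≤ k → ∀ p : ℝ,
      ‖iteratedDeriv k f p‖ ≤ Ck k * (1 + |p|) ^ (-((k : ℝ) + ε))) :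
    ∃ V : ℝ → E,
      Integrable V ∧
      (∀ ψ : 𝓢(ℝ, ℂ),
        ∫ p : ℝ, ((2 * π : ℝ)⁻¹ • ∫ r : ℝ, Complex.exp (Complex.I * p * r) * ψ r) • f p =
          ∫ r : ℝ, ψ r • V r) ∧
      ContDiffOn ℝ ∞ V {0}ᶜ ∧
      (∀ ℓ k : ℕ, ∃ Clk : ℝ, ∀ r : ℝ, r ≠ 0 →
        ‖iteratedDerivWithin k V {0}ᶜ r‖ ≤
          Clk * |r| ^ (ε - (k : ℝ) - 1) * (1 + |r|) ^ (-(ℓ : ℝ))) := by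
  have hsymbol : IsSymbol (-ε) fun x => f (2 * π * x) := by
    refine (IsSymbol.of_norm_iteratedDeriv_le (by linarith) hf htop hbot fun k hk =>
      ⟨Ck k, fun p => ?_⟩).comp_const_mul (by linarith) ?_
    · simpa only [neg_add_rev, sub_eq_add_neg, neg_add] using hder k hk p
    · rw [abs_of_pos (by positivity)]
      linarith [pi_gt_three]
  have hm1 : -1 < -ε := by linarith
  have hm0 : -ε < 0 := by linarith
  refine ⟨fourierInvKernel fun x => f (2 * π * x), hsymbol.integrable_fourierInvKernel hm1 hm0,
    fun ψ => ?_, hsymbol.contDiffOn_fourierInvKernel hm0, fun ℓ k => ?_⟩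
  · rw [← hsymbol.integral_fourierInv_smul_eq hm1 hm0]
    have h := Measure.integral_comp_mul_left
      (fun p : ℝ => (∫ r : ℝ, Complex.exp (Complex.I * p * r) * ψ r) • f p) (2 * π)
    simp only [fourierInv_eq_integral_exp, smul_assoc, integral_smul, smul_eq_mul]
    rw [h, abs_of_pos (by positivity)]
  · obtain ⟨C, hC⟩ := hsymbol.exists_norm_iteratedDeriv_fourierInvKernel_le hm1 hm0 ℓ k
    refine ⟨C, fun r hr => ?_⟩
    rw [iteratedDerivWithin_of_isOpen isOpen_compl_singleton hr]
    simpa using hC r hr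

/-- if `f ∈ C^∞` vanishes at `±∞` with `|f^{(k)}(p)| ≤ C_k (1+|p|)^{-(k+ε)}`
for all `k ≥ 1` and `0 < ε ≤ 1/2`, then the distributional inverse Fourier transform of
`f` is represented by `V ∈ C^∞(ℝ \ {0})` with the combined estimate
`|V^{(k)}(r)| ≤ C_{ℓ,k} |r|^{ε-k-1} (1+|r|)^{-ℓ}`. -/
theorem stmt8 (f : ℝ → ℂ) (Ck : ℕ → ℝ) (ε : ℝ) (hε0 : 0 < ε) (hε1 : ε ≤ 1/2)
    (hf : ContDiff ℝ (⊤ : ℕ∞) f)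
    (htop : Tendsto f atTop (𝓝 0)) (hbot : Tendsto f atBot (𝓝 0))
    (hder : ∀ k : ℕ, 1 ≤ k → ∀ p : ℝ,
      ‖iteratedDeriv k f p‖ ≤ Ck k * (1 + |p|) ^ (-((k : ℝ) + ε))) :
    ∃ V : ℝ → ℂ,
      LocallyIntegrable V ∧
      (∀ ψ : SchwartzMap ℝ ℂ,
        ∫ p : ℝ, f p * ((2 * π : ℝ)⁻¹ • ∫ r : ℝ, Complex.exp (Complex.I * p * r) * ψ r) =
          ∫ r : ℝ, V r * ψ r) ∧
      ContDiffOn ℝ (⊤ : ℕ∞) V {0}ᶜ ∧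
      (∀ ℓ k : ℕ, ∃ Clk : ℝ, ∀ r : ℝ, r ≠ 0 →
        ‖iteratedDerivWithin k V {0}ᶜ r‖ ≤ Clk * |r| ^ (ε - (k : ℝ) - 1) * (1 + |r|) ^ (-(ℓ : ℝ))) := by
  obtain ⟨V, hV, hpair, hrest⟩ :=
    stmt8_general f Ck ε hε0 (by linarith) hf htop hbot hder
  exact ⟨V, hV.locallyIntegrable, by simpa only [smul_eq_mul, mul_comm] using hpair, hrest⟩
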